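/- arXiv:2302.01077 — 2 statements merged into one kernel-verified Lean document; each statement's English description precedes it below -/
import Mathlib

section
/- Let f be a bijective transformation of G_∞(H) which preserves the ortho-adjacency relation in both directions (i.e., X, Y are ortho-adjacent if and only if f(X), f(Y) are ortho-adjacent). Then f also preserves the adjacency relation in both directions: X, Y ∈ G_∞(H) are adjacent if and only if f(X), f(Y) are adjacent. -/
open Module Submodule Classical

variable {H : Type*} [NormedAddCommGroup H] [InnerProductSpace ℂ H] [CompleteSpace H]

/-- The orthogonal projection of `H` onto a closed subspace `K`, as a map `H →L[ℂ] H`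
(defined to be `0` if `K` is not closed). -/
noncomputable def projCLM (K : Submodule ℂ H) : H →L[ℂ] H :=
  if h : IsClosed (K : Set H) then
    haveI : CompleteSpace K := h.completeSpace_coe
    K.subtypeL.comp (orthogonalProjection K)
  else 0

/-- Two (closed) subspaces are compatible if their orthogonal projections commute. -/
def Compatible (K L : Submodule ℂ H) : Prop := Commute (projCLM K) (projCLM L)

/-- `W` is a subspace of `X` of finite codimension `n` in `X`. -/
def CodimIn (W X : Submodule ℂ H) (n : ℕ) : Prop :=
  W ≤ X ∧ FiniteDimensional ℂ (↥X ⧸ W.comap X.subtype) ∧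
    finrank ℂ (↥X ⧸ W.comap X.subtype) = n

/-- `X` and `Y` are adjacent: `X ∩ Y` is a hyperplane in both `X` and `Y`. -/
def Adjacent (X Y : Submodule ℂ H) : Prop :=
  CodimIn (X ⊓ Y) X 1 ∧ CodimIn (X ⊓ Y) Y 1

/-- `X` and `Y` are ortho-adjacent: adjacent and compatible. -/
def OrthoAdjacent (X Y : Submodule ℂ H) : Prop := Adjacent X Y ∧ Compatible X Y

/-- The Grassmannian `G_∞(H)` of closed subspaces of `H` whose dimension and
codimension both are infinite. -/
def Ginf : Set (Submodule ℂ H) :=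
  {X | IsClosed (X : Set H) ∧ ¬FiniteDimensional ℂ X ∧ ¬FiniteDimensional ℂ Xᗮ}

/-- `X ∩ Y` has the same finite codimension in both `X` and `Y`. -/
def SameFinCodim (X Y : Submodule ℂ H) : Prop :=
  ∃ n : ℕ, CodimIn (X ⊓ Y) X n ∧ CodimIn (X ⊓ Y) Y n

/-- An `A`-component of `G_∞(H)`: a set of elements pairwise at the same finite
codimension, maximal with respect to this property. -/
def IsAComponent (C : Set (Submodule ℂ H)) : Prop :=
  C ⊆ Ginf ∧ (∀ X ∈ C, ∀ Y ∈ C, SameFinCodim X Y) ∧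
    ∀ D : Set (Submodule ℂ H), D ⊆ Ginf → (∀ X ∈ D, ∀ Y ∈ D, SameFinCodim X Y) →
      C ⊆ D → D = C

/-- The star `S(X)`: all closed subspaces of `H` containing `X` as a hyperplane. -/
def starSet (X : Submodule ℂ H) : Set (Submodule ℂ H) :=
  {Y | IsClosed (Y : Set H) ∧ CodimIn X Y 1}

/-- The top `G¹(X)`: all closed hyperplanes of `X`. -/
def topSet (X : Submodule ℂ H) : Set (Submodule ℂ H) :=
  {M | IsClosed (M : Set H) ∧ CodimIn M X 1}

/-- The image `U(M)` of a subspace `M ⊆ X` under a linear isometry `U : X ≃ X'`,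
viewed as a subspace of `H`. -/
def imL (X X' : Submodule ℂ H) (U : ↥X ≃ₗᵢ[ℂ] ↥X') (M : Submodule ℂ H) : Submodule ℂ H :=
  Submodule.map X'.subtype (Submodule.map U.toLinearEquiv.toLinearMap (M.comap X.subtype))

/-- The image `U(M)` of a subspace `M ⊆ X` under a conjugate-linear isometry `U : X ≃ X'`,
viewed as a subspace of `H`. -/
def imC (X X' : Submodule ℂ H) (U : ↥X ≃ₗᵢ⋆[ℂ] ↥X') (M : Submodule ℂ H) : Submodule ℂ H :=
  Submodule.map X'.subtype (Submodule.map U.toLinearEquiv.toLinearMap (M.comap X.subtype))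

/-- The Grassmannian `G_k(H)` of `k`-dimensional subspaces of `H`. -/
def Gk (k : ℕ) : Set (Submodule ℂ H) :=
  {X | FiniteDimensional ℂ X ∧ finrank ℂ X = k}

/-- The Grassmannian `G^k(H)` of closed subspaces of `H` of codimension `k`. -/
def GCk (k : ℕ) : Set (Submodule ℂ H) :=
  {X | IsClosed (X : Set H) ∧ FiniteDimensional ℂ (H ⧸ X) ∧ finrank ℂ (H ⧸ X) = k}

/-!
In a modular lattice, pairwise adjacent elements `a`, `b`, `c` form a star (`a ⊓ b ≤ c`) or a top
(`c ≤ a ⊔ b`). If they do not form both, then all elements adjacent to the three of them cover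
`a ⊓ b`, or all are covered by `a ⊔ b`, so any two distinct such elements are adjacent. Pairwise
ortho-adjacent subspaces never form both, since `c ⊓ (a ⊔ b) = (c ⊓ a) ⊔ (c ⊓ b)` whenever `c` is
compatible with `a` and `b`.

Conversely, if `X` and `Y` are adjacent, then adding to `X ⊓ Y` each of three orthonormal vectors of
the infinite-dimensional space `(X ⊔ Y)ᗮ` gives three pairwise ortho-adjacent subspaces which are
ortho-adjacent to both `X` and `Y`. Hence adjacency of distinct elements of `G_∞(H)` is expressible
through ortho-adjacency alone.
-/

/-- Adjacency in a lattice: `a ⊓ b` is covered by both `a` and `b`. For subspaces this says that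
`a ⊓ b` is a hyperplane in both. -/
def InfCovBy {α : Type*} [Lattice α] (a b : α) : Prop := a ⊓ b ⋖ a ∧ a ⊓ b ⋖ b

namespace InfCovBy

variable {α : Type*} [Lattice α] {a b c m x y : α}

theorem symm (h : InfCovBy a b) : InfCovBy b a := by
  rw [InfCovBy, inf_comm]
  exact And.symm h

theorem not_le (h : InfCovBy a b) : ¬a ≤ b := fun hab => h.1.ne (inf_eq_left.2 hab)

theorem ne (h : InfCovBy a b) : a ≠ b := fun hab => h.not_le hab.le

theorem of_covBy (ha : m ⋖ a) (hb : m ⋖ b) (hab : a ≠ b) : InfCovBy a b := by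
  rw [InfCovBy, ha.wcovBy.inf_eq hb.wcovBy hab]
  exact ⟨ha, hb⟩

theorem inf_eq_of_covBy_of_le (h : InfCovBy a b) (hm : m ⋖ a) (hmb : m ≤ b) : a ⊓ b = m :=
  (hm.eq_or_eq (le_inf hm.le hmb) inf_le_left).resolve_right h.1.ne

theorem inf_le_or_le_sup (hab : InfCovBy a b) (hac : InfCovBy a c) (hbc : InfCovBy b c) :
    a ⊓ b ≤ c ∨ c ≤ a ⊔ b := by
  rcases eq_or_ne (a ⊓ c) (b ⊓ c) with heq | hne
  · left
    have hle : a ⊓ c ≤ b := heq.le.trans inf_le_left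
    exact (hab.inf_eq_of_covBy_of_le hac.1 hle).le.trans inf_le_right
  · right
    calc c = a ⊓ c ⊔ b ⊓ c := (hac.2.wcovBy.sup_eq hbc.2.wcovBy hne).symm
      _ ≤ a ⊔ b := sup_le_sup inf_le_left inf_le_left

section UpperModular

variable [IsWeakUpperModularLattice α]

theorem toDual (h : InfCovBy a b) : InfCovBy (OrderDual.toDual a) (OrderDual.toDual b) :=
  ⟨(h.1.sup_of_inf_of_inf_left h.2).toDual, (h.1.sup_of_inf_of_inf_right h.2).toDual⟩

theorem inf_le_of_not_le_sup (hab : InfCovBy a b) (hac : InfCovBy a c) (hstar : a ⊓ b ≤ c)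
    (hc : ¬c ≤ a ⊔ b) (hxa : InfCovBy x a) (hxb : InfCovBy x b) (hxc : InfCovBy x c) :
    a ⊓ b ≤ x := by
  by_contra hx
  have hinf : a ⊓ c = a ⊓ b := hac.inf_eq_of_covBy_of_le hab.1 hstar
  have hx_ab : x ≤ a ⊔ b := (hab.inf_le_or_le_sup hxa.symm hxb.symm).resolve_left hx
  have hx_ac : x ≤ a ⊔ c :=
    (hac.inf_le_or_le_sup hxa.symm hxc.symm).resolve_left (hinf ▸ hx)
  have hne : a ⊔ b ≠ a ⊔ c := fun h => hc (h ▸ le_sup_right)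
  have hsup : (a ⊔ b) ⊓ (a ⊔ c) = a :=
    (hab.1.sup_of_inf_of_inf_left hab.2).wcovBy.inf_eq
      (hac.1.sup_of_inf_of_inf_left hac.2).wcovBy hne
  exact hxa.not_le (hsup ▸ le_inf hx_ab hx_ac)

theorem of_common_star (hab : InfCovBy a b) (hac : InfCovBy a c) (hstar : a ⊓ b ≤ c)
    (hc : ¬c ≤ a ⊔ b) (hxa : InfCovBy x a) (hxb : InfCovBy x b) (hxc : InfCovBy x c)
    (hya : InfCovBy y a) (hyb : InfCovBy y b) (hyc : InfCovBy y c) (hxy : x ≠ y) :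
    InfCovBy x y := by
  have covBy_of_adj {z : α} (hza : InfCovBy z a) (hzb : InfCovBy z b) (hzc : InfCovBy z c) :
      a ⊓ b ⋖ z := by
    rw [← hza.symm.inf_eq_of_covBy_of_le hab.1 (inf_le_of_not_le_sup hab hac hstar hc hza hzb hzc)]
    exact hza.symm.2
  exact of_covBy (covBy_of_adj hxa hxb hxc) (covBy_of_adj hya hyb hyc) hxy

end UpperModular

theorem of_common_triangle [IsWeakUpperModularLattice α] [IsWeakLowerModularLattice α]
    (hab : InfCovBy a b) (hac : InfCovBy a c) (hbc : InfCovBy b c)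
    (hnot : ¬(a ⊓ b ≤ c ∧ c ≤ a ⊔ b))
    (hxa : InfCovBy x a) (hxb : InfCovBy x b) (hxc : InfCovBy x c)
    (hya : InfCovBy y a) (hyb : InfCovBy y b) (hyc : InfCovBy y c) (hxy : x ≠ y) :
    InfCovBy x y := by
  rcases hab.inf_le_or_le_sup hac hbc with hstar | htop
  · exact of_common_star hab hac hstar (fun htop => hnot ⟨hstar, htop⟩)
      hxa hxb hxc hya hyb hyc hxy
  · exact (of_common_star hab.toDual hac.toDual htop (fun hstar => hnot ⟨hstar, htop⟩)
      hxa.toDual hxb.toDual hxc.toDual hya.toDual hyb.toDual hyc.toDual hxy).toDual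

end InfCovBy

section Projection

variable {𝕜 E : Type*} [RCLike 𝕜] [NormedAddCommGroup E] [InnerProductSpace 𝕜 E]
  {K L M : Submodule 𝕜 E} [K.HasOrthogonalProjection]

theorem commute_starProjection_iff_mem_invtSubmodule [L.HasOrthogonalProjection] :
    Commute K.starProjection L.starProjection ↔
      L ∈ End.invtSubmodule (K.starProjection : E →ₗ[𝕜] E) := by
  rw [Commute.symm_iff, ContinuousLinearMap.IsIdempotentElem.commute_iff
    L.isIdempotentElem_starProjection, L.range_starProjection, L.ker_starProjection]
  exact and_iff_left_of_imp K.starProjection_isSymmetric.orthogonalComplement_mem_invtSubmodule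

theorem mem_invtSubmodule_starProjection_of_le (h : L ≤ K) :
    L ∈ End.invtSubmodule (K.starProjection : E →ₗ[𝕜] E) := fun x hx => by
  simpa [starProjection_eq_self_iff.2 (h hx)] using hx

theorem mem_invtSubmodule_starProjection_of_le_orthogonal (h : L ≤ Kᗮ) :
    L ∈ End.invtSubmodule (K.starProjection : E →ₗ[𝕜] E) := fun x hx => by
  simp [K.starProjection_apply_eq_zero_iff.2 (h hx)]

theorem inf_sup_eq_of_mem_invtSubmodule_starProjection
    (hL : L ∈ End.invtSubmodule (K.starProjection : E →ₗ[𝕜] E))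
    (hM : M ∈ End.invtSubmodule (K.starProjection : E →ₗ[𝕜] E)) :
    K ⊓ (L ⊔ M) = K ⊓ L ⊔ K ⊓ M := by
  refine le_antisymm ?_ le_inf_sup
  rintro x ⟨hxK, hxLM⟩
  obtain ⟨y, hy, z, hz, rfl⟩ := mem_sup.1 hxLM
  rw [← starProjection_eq_self_iff.2 hxK, map_add]
  exact add_mem_sup ⟨K.starProjection_apply_mem y, hL hy⟩ ⟨K.starProjection_apply_mem z, hM hz⟩

end Projection

section Dimension

theorem exists_span_singleton_sup_eq_of_covBy {R M : Type*} [Ring R] [AddCommGroup M] [Module R M]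
    {K L : Submodule R M} (h : K ⋖ L) : ∃ x, span R {x} ⊔ K = L := by
  obtain ⟨x, hxL, hxK⟩ := SetLike.exists_of_lt h.lt
  refine ⟨x, (h.eq_or_eq le_sup_right (sup_le ?_ h.le)).resolve_left fun hK => hxK ?_⟩
  · exact (span_singleton_le_iff_mem x L).2 hxL
  · exact hK.le (mem_sup_left (mem_span_singleton_self x))

theorem finite_of_covBy {R M : Type*} [Ring R] [AddCommGroup M] [Module R M]
    {K L : Submodule R M} (h : K ⋖ L) [Module.Finite R K] : Module.Finite R L := by
  obtain ⟨x, rfl⟩ := exists_span_singleton_sup_eq_of_covBy h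
  infer_instance

variable {𝕜 E : Type*} [RCLike 𝕜] [NormedAddCommGroup E] [InnerProductSpace 𝕜 E]
  {K L : Submodule 𝕜 E}

theorem covBy_sup_span_singleton_of_mem_orthogonal {w : E} (hw : w ∈ Kᗮ) (hw0 : w ≠ 0) :
    K ⋖ K ⊔ span 𝕜 {w} := by
  rw [sup_comm]
  exact covBy_span_singleton_sup fun h => hw0 (disjoint_def.1 K.orthogonal_disjoint w h hw)

theorem finiteDimensional_orthogonal_of_sup (F : Submodule 𝕜 E) [FiniteDimensional 𝕜 F]
    (h : FiniteDimensional 𝕜 ↥(F ⊔ K)ᗮ) : FiniteDimensional 𝕜 Kᗮ := by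
  refine .of_fg (fg_of_fg_map_of_fg_inf_ker (F.orthogonalProjectionOnto : E →ₗ[𝕜] F) ?_ ?_)
  · exact IsNoetherian.noetherian _
  · rw [ker_orthogonalProjectionOnto, inf_orthogonal, sup_comm]
    exact Module.Finite.iff_fg.1 h

theorem finiteDimensional_orthogonal_of_covBy (hKL : K ⋖ L) (h : FiniteDimensional 𝕜 Lᗮ) :
    FiniteDimensional 𝕜 Kᗮ := by
  obtain ⟨x, rfl⟩ := exists_span_singleton_sup_eq_of_covBy hKL
  exact finiteDimensional_orthogonal_of_sup (span 𝕜 {x}) h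

theorem exists_orthonormal_fin_of_not_finiteDimensional (h : ¬FiniteDimensional 𝕜 E) (n : ℕ) :
    ∃ e : Fin n → E, Orthonormal 𝕜 e := by
  have hn : (n : Cardinal) ≤ Module.rank 𝕜 E :=
    Cardinal.natCast_le_aleph0.trans (not_lt.1 (mt Module.rank_lt_aleph0_iff.1 h))
  obtain ⟨v, hv⟩ := exists_linearIndependent_of_le_rank hn
  exact ⟨_, InnerProductSpace.gramSchmidtNormed_orthonormal hv⟩

end Dimension

section Adjacent

variable {E : Type*} [NormedAddCommGroup E] [InnerProductSpace ℂ E] {X Y : Submodule ℂ E}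

theorem codimIn_one_iff_covBy : CodimIn X Y 1 ↔ X ⋖ Y := by
  suffices h : X ≤ Y → (CodimIn X Y 1 ↔ X ⋖ Y) from
    ⟨fun hXY => (h hXY.1).1 hXY, fun hXY => (h hXY.le).2 hXY⟩
  intro hle
  rw [covBy_iff_quot_is_simple hle, isSimpleModule_iff_finrank_eq_one]
  exact ⟨fun h => h.2.2, fun h => ⟨hle, Module.finite_of_finrank_eq_succ h, h⟩⟩

theorem adjacent_iff_infCovBy : Adjacent X Y ↔ InfCovBy X Y :=
  and_congr codimIn_one_iff_covBy codimIn_one_iff_covBy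

theorem not_finiteDimensional_orthogonal_sup_of_adjacent (hX : X ∈ Ginf (H := E))
    (hXY : Adjacent X Y) : ¬FiniteDimensional ℂ ↥(X ⊔ Y)ᗮ := fun h =>
  hX.2.2 (finiteDimensional_orthogonal_of_covBy (adjacent_iff_infCovBy.1 hXY).2.sup_of_inf_right h)

theorem mem_Ginf_of_adjacent (hX : X ∈ Ginf (H := E)) (hY : IsClosed (Y : Set E))
    (hXY : Adjacent X Y) : Y ∈ Ginf (H := E) := by
  refine ⟨hY, fun hfin => hX.2.1 ?_, fun hfin => ?_⟩
  · have : FiniteDimensional ℂ ↥(X ⊓ Y) := finiteDimensional_of_le inf_le_right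
    exact finite_of_covBy (adjacent_iff_infCovBy.1 hXY).1
  · exact not_finiteDimensional_orthogonal_sup_of_adjacent hX hXY
      (finiteDimensional_of_le (orthogonal_le le_sup_right))

end Adjacent

section Compatible

variable {K L M : Submodule ℂ H}

theorem projCLM_eq_starProjection (K : Submodule ℂ H) [CompleteSpace K] :
    projCLM K = K.starProjection :=
  dif_pos (completeSpace_coe_iff_isComplete.1 ‹_›).isClosed

theorem compatible_iff_mem_invtSubmodule [CompleteSpace K] [CompleteSpace L] :
    Compatible K L ↔ L ∈ End.invtSubmodule (K.starProjection : H →ₗ[ℂ] H) := by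
  rw [Compatible, projCLM_eq_starProjection, projCLM_eq_starProjection,
    commute_starProjection_iff_mem_invtSubmodule]

theorem Compatible.inf_sup_eq [CompleteSpace K] [CompleteSpace L] [CompleteSpace M]
    (hL : Compatible K L) (hM : Compatible K M) : K ⊓ (L ⊔ M) = K ⊓ L ⊔ K ⊓ M :=
  inf_sup_eq_of_mem_invtSubmodule_starProjection
    (compatible_iff_mem_invtSubmodule.1 hL) (compatible_iff_mem_invtSubmodule.1 hM)

theorem compatible_sup_of_le_of_le_orthogonal [CompleteSpace K] [CompleteSpace ↥(L ⊔ M)]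
    (hL : L ≤ K) (hM : M ≤ Kᗮ) : Compatible K (L ⊔ M) :=
  compatible_iff_mem_invtSubmodule.2 <| Sublattice.sup_mem
    (mem_invtSubmodule_starProjection_of_le hL)
    (mem_invtSubmodule_starProjection_of_le_orthogonal hM)

end Compatible

section OrthoAdjacent

variable {X Y A B C Z : Submodule ℂ H}

theorem OrthoAdjacent.infCovBy (h : OrthoAdjacent X Y) : InfCovBy X Y := adjacent_iff_infCovBy.1 h.1

theorem OrthoAdjacent.symm (h : OrthoAdjacent X Y) : OrthoAdjacent Y X :=
  ⟨adjacent_iff_infCovBy.2 h.infCovBy.symm, Commute.symm h.2⟩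

theorem OrthoAdjacent.not_inf_le_and_le_sup [CompleteSpace A] [CompleteSpace B] [CompleteSpace C]
    (hab : OrthoAdjacent A B) (hac : OrthoAdjacent A C) (hbc : OrthoAdjacent B C) :
    ¬(A ⊓ B ≤ C ∧ C ≤ A ⊔ B) := by
  rintro ⟨hstar, htop⟩
  have hCA : C ⊓ A ≤ B := by
    rw [inf_comm, hac.infCovBy.inf_eq_of_covBy_of_le hab.infCovBy.1 hstar]
    exact inf_le_right
  have hC_le : C ≤ B := calc
    C = C ⊓ (A ⊔ B) := (inf_eq_left.2 htop).symm
    _ = C ⊓ A ⊔ C ⊓ B := hac.symm.2.inf_sup_eq hbc.symm.2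
    _ ≤ B := sup_le hCA inf_le_right
  exact hbc.symm.infCovBy.not_le hC_le

theorem orthoAdjacent_sup_span_singleton (hX : IsClosed (X : Set H)) (hZ : IsClosed (Z : Set H))
    (hZX : Z ⋖ X) {w : H} (hw : w ∈ Xᗮ) (hw0 : w ≠ 0) :
    OrthoAdjacent X (Z ⊔ span ℂ {w}) := by
  have hcov : Z ⋖ Z ⊔ span ℂ {w} :=
    covBy_sup_span_singleton_of_mem_orthogonal (orthogonal_le hZX.le hw) hw0
  have hne : X ≠ Z ⊔ span ℂ {w} := by
    rintro rfl
    exact hw0 (disjoint_def.1 (orthogonal_disjoint _) w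
      (mem_sup_right (mem_span_singleton_self w)) hw)
  have : CompleteSpace X := hX.completeSpace_coe
  have : CompleteSpace ↥(Z ⊔ span ℂ {w}) :=
    (isClosed_sup_finiteDimensional Z (span ℂ {w}) hZ).completeSpace_coe
  exact ⟨adjacent_iff_infCovBy.2 (.of_covBy hZX hcov hne),
    compatible_sup_of_le_of_le_orthogonal hZX.le ((span_singleton_le_iff_mem _ _).2 hw)⟩

end OrthoAdjacent

section CommonOrthoTriangle

variable {X Y : Submodule ℂ H}

/-- There are three pairwise ortho-adjacent elements of `G_∞(H)`, each ortho-adjacent to both `X`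
and `Y`. For distinct `X` and `Y` this characterizes adjacency in terms of ortho-adjacency. -/
def HaveCommonOrthoTriangle (X Y : Submodule ℂ H) : Prop :=
  ∃ W : Fin 3 → Submodule ℂ H, (∀ i, W i ∈ Ginf (H := H)) ∧
    Pairwise (fun i j => OrthoAdjacent (W i) (W j)) ∧
    ∀ i, OrthoAdjacent X (W i) ∧ OrthoAdjacent Y (W i)

theorem HaveCommonOrthoTriangle.adjacent (hne : X ≠ Y) (h : HaveCommonOrthoTriangle X Y) :
    Adjacent X Y := by
  obtain ⟨W, hW, hpair, hXYW⟩ := h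
  have (i : Fin 3) : CompleteSpace (W i) := (hW i).1.completeSpace_coe
  have h01 : OrthoAdjacent (W 0) (W 1) := hpair (by decide)
  have h02 : OrthoAdjacent (W 0) (W 2) := hpair (by decide)
  have h12 : OrthoAdjacent (W 1) (W 2) := hpair (by decide)
  have hXW (i : Fin 3) : InfCovBy X (W i) := (hXYW i).1.infCovBy
  have hYW (i : Fin 3) : InfCovBy Y (W i) := (hXYW i).2.infCovBy
  exact adjacent_iff_infCovBy.2 <| .of_common_triangle h01.infCovBy h02.infCovBy h12.infCovBy
    (h01.not_inf_le_and_le_sup h02 h12) (hXW 0) (hXW 1) (hXW 2) (hYW 0) (hYW 1) (hYW 2) hne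

theorem haveCommonOrthoTriangle_of_adjacent (hX : X ∈ Ginf (H := H)) (hY : Y ∈ Ginf (H := H))
    (h : Adjacent X Y) : HaveCommonOrthoTriangle X Y := by
  obtain ⟨e, he⟩ := exists_orthonormal_fin_of_not_finiteDimensional
    (not_finiteDimensional_orthogonal_sup_of_adjacent hX h) 3
  obtain ⟨hZX, hZY⟩ := adjacent_iff_infCovBy.1 h
  have hZ : IsClosed ((X ⊓ Y : Submodule ℂ H) : Set H) := hX.1.inter hY.1
  have e_ne_zero (i : Fin 3) : (e i : H) ≠ 0 := mt coe_eq_zero.1 (he.ne_zero i)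
  have e_mem_orthogonal {K : Submodule ℂ H} (hK : K ≤ X ⊔ Y) (i : Fin 3) : (e i : H) ∈ Kᗮ :=
    orthogonal_le hK (e i).2
  let W (i : Fin 3) : Submodule ℂ H := X ⊓ Y ⊔ span ℂ {(e i : H)}
  have hW (i : Fin 3) : IsClosed (W i : Set H) := isClosed_sup_finiteDimensional _ _ hZ
  have hXW (i : Fin 3) : OrthoAdjacent X (W i) :=
    orthoAdjacent_sup_span_singleton hX.1 hZ hZX (e_mem_orthogonal le_sup_left i) (e_ne_zero i)
  have hYW (i : Fin 3) : OrthoAdjacent Y (W i) :=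
    orthoAdjacent_sup_span_singleton hY.1 hZ hZY (e_mem_orthogonal le_sup_right i) (e_ne_zero i)
  have hWW : Pairwise fun i j => OrthoAdjacent (W i) (W j) := fun i j hij => by
    have hZW : X ⊓ Y ⋖ W i :=
      covBy_sup_span_singleton_of_mem_orthogonal (e_mem_orthogonal inf_le_sup i) (e_ne_zero i)
    have hej : (e j : H) ∈ (W i)ᗮ := by
      rw [← inf_orthogonal]
      exact ⟨e_mem_orthogonal inf_le_sup j,
        mem_orthogonal_singleton_iff_inner_right.2 (he.2 hij)⟩
    exact orthoAdjacent_sup_span_singleton (hW i) hZ hZW hej (e_ne_zero j)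
  exact ⟨W, fun i => mem_Ginf_of_adjacent hX (hW i) (hXW i).1, hWW, fun i => ⟨hXW i, hYW i⟩⟩

theorem adjacent_iff_ne_and_haveCommonOrthoTriangle (hX : X ∈ Ginf (H := H))
    (hY : Y ∈ Ginf (H := H)) : Adjacent X Y ↔ X ≠ Y ∧ HaveCommonOrthoTriangle X Y :=
  ⟨fun h => ⟨(adjacent_iff_infCovBy.1 h).ne, haveCommonOrthoTriangle_of_adjacent hX hY h⟩,
    fun h => h.2.adjacent h.1⟩

theorem haveCommonOrthoTriangle_map_iff {f : Submodule ℂ H → Submodule ℂ H}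
    (hmaps : Set.MapsTo f (Ginf (H := H)) (Ginf (H := H)))
    (hsurj : Set.SurjOn f (Ginf (H := H)) (Ginf (H := H)))
    (hf : ∀ X ∈ Ginf (H := H), ∀ Y ∈ Ginf (H := H),
      OrthoAdjacent X Y ↔ OrthoAdjacent (f X) (f Y))
    (hX : X ∈ Ginf (H := H)) (hY : Y ∈ Ginf (H := H)) :
    HaveCommonOrthoTriangle (f X) (f Y) ↔ HaveCommonOrthoTriangle X Y := by
  constructor
  · rintro ⟨W', hW', hpair, hXYW⟩
    choose W hW hfW using fun i => hsurj (hW' i)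
    obtain rfl : f ∘ W = W' := funext hfW
    exact ⟨W, hW, fun i j hij => (hf _ (hW i) _ (hW j)).2 (hpair hij),
      fun i => ⟨(hf _ hX _ (hW i)).2 (hXYW i).1, (hf _ hY _ (hW i)).2 (hXYW i).2⟩⟩
  · rintro ⟨W, hW, hpair, hXYW⟩
    exact ⟨f ∘ W, fun i => hmaps (hW i), fun i j hij => (hf _ (hW i) _ (hW j)).1 (hpair hij),
      fun i => ⟨(hf _ hX _ (hW i)).1 (hXYW i).1, (hf _ hY _ (hW i)).1 (hXYW i).2⟩⟩

end CommonOrthoTriangle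

/-- a bijective transformation of `G_∞(H)` preserving ortho-adjacency in both
directions also preserves adjacency in both directions. -/
theorem stmt8 (hH : ¬FiniteDimensional ℂ H)
    (f : Submodule ℂ H → Submodule ℂ H)
    (hbij : Set.BijOn f (Ginf (H := H)) (Ginf (H := H)))
    (hf : ∀ X ∈ Ginf (H := H), ∀ Y ∈ Ginf (H := H),
      OrthoAdjacent X Y ↔ OrthoAdjacent (f X) (f Y)) :
    ∀ X ∈ Ginf (H := H), ∀ Y ∈ Ginf (H := H),
      Adjacent X Y ↔ Adjacent (f X) (f Y) := by
  intro X hX Y hY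
  rw [adjacent_iff_ne_and_haveCommonOrthoTriangle hX hY,
    adjacent_iff_ne_and_haveCommonOrthoTriangle (hbij.mapsTo hX) (hbij.mapsTo hY),
    hbij.injOn.ne_iff hX hY, haveCommonOrthoTriangle_map_iff hbij.mapsTo hbij.surjOn hf hX hY]
end

section
/- Let f be a bijective transformation of G_∞(H) which preserves the ortho-adjacency relation in both directions. Let X, X' ∈ G_∞(H) be such that f maps the top G^1(X) onto the top G^1(X'), and let U : X → X' be a surjective linear or conjugate-linear isometry with f(M) = U(M) for every M ∈ G^1(X). Suppose Z ∈ G_∞(H) is a closed subspace of X of codimension 2 in X and f maps the star S(Z) onto a star S(Z') for some Z' ∈ G_∞(H). Then Z' = U(Z), i.e., f(S(Z)) = S(U(Z)). -/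
open Module Submodule Classical

variable {H : Type*} [NormedAddCommGroup H] [InnerProductSpace ℂ H] [CompleteSpace H]

/-!
A subspace `Z` of codimension two in `X` is the intersection of two distinct hyperplanes `M₁`, `M₂`
of `X`, and these belong both to the top of `X` and to the star of `Z`. Hence `Z'` is a hyperplane
of the two distinct subspaces `f M₁ = U M₁` and `f M₂ = U M₂`, which forces
`Z' = U M₁ ⊓ U M₂ = U (M₁ ⊓ M₂) = U Z`.
-/

section VectorSpace

variable {K V : Type*} [DivisionRing K] [AddCommGroup V] [Module K V]

theorem isCoatom_of_isAtom_of_finrank_eq_two (hV : finrank K V = 2) {L : Submodule K V}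
    (hL : IsAtom L) : IsCoatom L := by
  have : FiniteDimensional K V := .of_finrank_pos (by lia)
  have hrank : finrank K (V ⧸ L) = 1 := by
    have hsum := L.finrank_quotient_add_finrank
    rw [hV, isAtom_iff_finrank_eq_one.mp hL] at hsum
    lia
  exact isSimpleModule_iff_isCoatom.mp (isSimpleModule_iff_finrank_eq_one.mpr hrank)

theorem exists_ne_bot_covBy_covBy_top_of_finrank_eq_two (hV : finrank K V = 2) :
    ∃ L₁ L₂ : Submodule K V, L₁ ≠ L₂ ∧ (⊥ ⋖ L₁ ∧ L₁ ⋖ ⊤) ∧ (⊥ ⋖ L₂ ∧ L₂ ⋖ ⊤) := by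
  have : Nontrivial V := nontrivial_of_finrank_pos (R := K) (by lia)
  obtain ⟨L₁, hL₁⟩ := IsAtomic.exists_atom (Submodule K V)
  have hL₁' := isCoatom_of_isAtom_of_finrank_eq_two hV hL₁
  obtain ⟨L₂, hcompl⟩ := L₁.exists_isCompl
  have hL₂ := hcompl.isCoatom_iff_isAtom.mp hL₁'
  have hL₂' := hcompl.isAtom_iff_isCoatom.mp hL₁
  exact ⟨L₁, L₂, hcompl.disjoint.ne hL₁.ne_bot, ⟨hL₁.bot_covBy, hL₁'.covBy_top⟩,
    ⟨hL₂.bot_covBy, hL₂'.covBy_top⟩⟩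

theorem exists_ne_covBy_covBy_of_finrank_quotient_eq_two {W X : Submodule K V} (hWX : W ≤ X)
    (hrank : finrank K (X ⧸ W.comap X.subtype) = 2) :
    ∃ M₁ M₂ : Submodule K V, M₁ ≠ M₂ ∧ (W ⋖ M₁ ∧ M₁ ⋖ X) ∧ (W ⋖ M₂ ∧ M₂ ⋖ X) := by
  let lift (L : Submodule K (X ⧸ W.comap X.subtype)) : Submodule K V :=
    (L.comap (W.comap X.subtype).mkQ).map X.subtype
  have lift_injective : Function.Injective lift :=
    (map_injective_of_injective X.injective_subtype).comp
      (comap_injective_of_surjective (mkQ_surjective _))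
  have lift_covBy {L L'} (h : L ⋖ L') : lift L ⋖ lift L' :=
    map_covBy_of_injective X.injective_subtype (comap_covBy_of_surjective (mkQ_surjective _) h)
  have lift_bot : lift ⊥ = W := by simp [lift, ker_mkQ, map_comap_subtype, hWX]
  have lift_top : lift ⊤ = X := by simp [lift]
  obtain ⟨L₁, L₂, hne, ⟨hbot₁, htop₁⟩, ⟨hbot₂, htop₂⟩⟩ :=
    exists_ne_bot_covBy_covBy_top_of_finrank_eq_two hrank
  exact ⟨lift L₁, lift L₂, lift_injective.ne hne,
    ⟨lift_bot ▸ lift_covBy hbot₁, lift_top ▸ lift_covBy htop₁⟩,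
    ⟨lift_bot ▸ lift_covBy hbot₂, lift_top ▸ lift_covBy htop₂⟩⟩

end VectorSpace

theorem isClosed_of_covBy {𝕜 E : Type*} [NontriviallyNormedField 𝕜] [CompleteSpace 𝕜]
    [AddCommGroup E] [TopologicalSpace E] [IsTopologicalAddGroup E] [Module 𝕜 E]
    [ContinuousSMul 𝕜 E] {W M : Submodule 𝕜 E} (hW : IsClosed (W : Set E)) (h : W ⋖ M) :
    IsClosed (M : Set E) := by
  obtain ⟨x, hxM, hxW⟩ := SetLike.exists_of_lt h.lt
  have hx : span 𝕜 {x} ≤ M := (span_singleton_le_iff_mem x M).mpr hxM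
  have hM : W ⊔ span 𝕜 {x} = M :=
    (h.eq_or_eq le_sup_left (sup_le h.le hx)).resolve_left fun hsup ↦
      hxW (hsup ▸ mem_sup_right (mem_span_singleton_self x))
  exact hM ▸ W.isClosed_sup_finiteDimensional _ hW

section InnerProductSpace

variable {E F : Type*} [NormedAddCommGroup E] [InnerProductSpace ℂ E]
  [NormedAddCommGroup F] [InnerProductSpace ℂ F]

theorem codimIn_one_iff_covBy_s12 {W X : Submodule ℂ E} : CodimIn W X 1 ↔ W ⋖ X := by
  constructor
  · rintro ⟨hWX, -, hrank⟩
    exact (covBy_iff_quot_is_simple hWX).mpr (isSimpleModule_iff_finrank_eq_one.mpr hrank)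
  · intro h
    have hrank := isSimpleModule_iff_finrank_eq_one.mp ((covBy_iff_quot_is_simple h.le).mp h)
    exact ⟨h.le, .of_finrank_pos (by lia), hrank⟩

theorem exists_ne_mem_starSet_inter_topSet {Z X : Submodule ℂ E} (hZ : IsClosed (Z : Set E))
    (hZX : CodimIn Z X 2) :
    ∃ M₁ ∈ starSet Z ∩ topSet X, ∃ M₂ ∈ starSet Z ∩ topSet X, M₁ ≠ M₂ := by
  have mem_of_covBy {M : Submodule ℂ E} (hM : Z ⋖ M ∧ M ⋖ X) : M ∈ starSet Z ∩ topSet X := by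
    have hMclosed := isClosed_of_covBy hZ hM.1
    exact ⟨⟨hMclosed, codimIn_one_iff_covBy_s12.mpr hM.1⟩, ⟨hMclosed, codimIn_one_iff_covBy_s12.mpr hM.2⟩⟩
  obtain ⟨M₁, M₂, hne, hM₁, hM₂⟩ :=
    exists_ne_covBy_covBy_of_finrank_quotient_eq_two hZX.1 hZX.2.2
  exact ⟨M₁, mem_of_covBy hM₁, M₂, mem_of_covBy hM₂, hne⟩

theorem inf_eq_of_mem_starSet {Z M₁ M₂ : Submodule ℂ E} (h₁ : M₁ ∈ starSet Z)
    (h₂ : M₂ ∈ starSet Z) (hne : M₁ ≠ M₂) : M₁ ⊓ M₂ = Z :=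
  (codimIn_one_iff_covBy_s12.mp h₁.2).wcovBy.inf_eq (codimIn_one_iff_covBy_s12.mp h₂.2).wcovBy hne

theorem imL_eq_map (X X' : Submodule ℂ E) (U : X ≃ₗᵢ[ℂ] X') (M : Submodule ℂ E) :
    imL X X' U M = (M.comap X.subtype).map (X'.subtype ∘ₛₗ U.toLinearEquiv.toLinearMap) :=
  (map_comp _ _ _).symm

theorem imC_eq_map (X X' : Submodule ℂ E) (U : X ≃ₗᵢ⋆[ℂ] X') (M : Submodule ℂ E) :
    imC X X' U M = (M.comap X.subtype).map (X'.subtype ∘ₛₗ U.toLinearEquiv.toLinearMap) :=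
  (map_comp _ _ _).symm

theorem stmt12_general {σ : ℂ →+* ℂ} [RingHomSurjective σ]
    {f : Submodule ℂ E → Submodule ℂ F} {X Z : Submodule ℂ E} {Z' : Submodule ℂ F}
    (hZ : IsClosed (Z : Set E)) (hZX : CodimIn Z X 2)
    (hstar : Set.MapsTo f (starSet Z) (starSet Z'))
    {U : X →ₛₗ[σ] F} (hU : Function.Injective U)
    (hfU : ∀ M ∈ topSet X, f M = (M.comap X.subtype).map U) :
    Z' = (Z.comap X.subtype).map U := by
  obtain ⟨M₁, ⟨hstar₁, htop₁⟩, M₂, ⟨hstar₂, htop₂⟩, hne⟩ :=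
    exists_ne_mem_starSet_inter_topSet hZ hZX
  have hfne : f M₁ ≠ f M₂ := by
    rw [hfU M₁ htop₁, hfU M₂ htop₂]
    refine (map_injective_of_injective hU).ne fun hcomap ↦ hne ?_
    calc
      M₁ = (M₁.comap X.subtype).map X.subtype := by
        rw [map_comap_subtype, inf_eq_right.mpr htop₁.2.1]
      _ = (M₂.comap X.subtype).map X.subtype := by rw [hcomap]
      _ = M₂ := by rw [map_comap_subtype, inf_eq_right.mpr htop₂.2.1]
  calc
    Z' = f M₁ ⊓ f M₂ := (inf_eq_of_mem_starSet (hstar hstar₁) (hstar hstar₂) hfne).symm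
    _ = ((M₁ ⊓ M₂).comap X.subtype).map U := by
      rw [hfU M₁ htop₁, hfU M₂ htop₂, comap_inf, map_inf U hU]
    _ = (Z.comap X.subtype).map U := by rw [inf_eq_of_mem_starSet hstar₁ hstar₂ hne]

end InnerProductSpace

/-- with `f`, `X`, `X'`, `U` as in Statement 11, if `Z ∈ G_∞(H)` is a closed
subspace of `X` of codimension 2 in `X` and `f` maps the star `S(Z)` onto a star `S(Z')`,
then `Z' = U(Z)`. -/
theorem stmt12 (hH : ¬FiniteDimensional ℂ H)
    (f : Submodule ℂ H → Submodule ℂ H)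
    (hbij : Set.BijOn f (Ginf (H := H)) (Ginf (H := H)))
    (hf : ∀ X ∈ Ginf (H := H), ∀ Y ∈ Ginf (H := H),
      OrthoAdjacent X Y ↔ OrthoAdjacent (f X) (f Y))
    (X X' : Submodule ℂ H) (hX : X ∈ Ginf (H := H)) (hX' : X' ∈ Ginf (H := H))
    (htop : f '' topSet X = topSet X')
    (Z : Submodule ℂ H) (hZ : Z ∈ Ginf (H := H)) (hZcodim : CodimIn Z X 2)
    (Z' : Submodule ℂ H) (hZ' : Z' ∈ Ginf (H := H))
    (hstar : f '' starSet Z = starSet Z') :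
    (∀ U : ↥X ≃ₗᵢ[ℂ] ↥X',
      (∀ M ∈ topSet X, f M = imL X X' U M) → Z' = imL X X' U Z) ∧
    (∀ U : ↥X ≃ₗᵢ⋆[ℂ] ↥X',
      (∀ M ∈ topSet X, f M = imC X X' U M) → Z' = imC X X' U Z) := by
  have hmaps : Set.MapsTo f (starSet Z) (starSet Z') := Set.mapsTo_iff_image_subset.mpr hstar.subset
  simp only [imL_eq_map, imC_eq_map]
  exact ⟨fun U ↦ stmt12_general hZ.1 hZcodim hmaps (X'.injective_subtype.comp U.injective),
    fun U ↦ stmt12_general hZ.1 hZcodim hmaps (X'.injective_subtype.comp U.injective)⟩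
end
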